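/- Connection relation for Gegenbauer polynomials: for n ∈ ℕ₀, ν, μ ∈ (−1/2, ∞) \ {0}, and all x, C_n^ν(x) = ((2ν)_n/(ν+1/2)_n) Σ_{k=0}^n [ (ν+k+1/2)_{n−k} (2ν+n)_k (μ+1/2)_k Γ(2μ+k) ] / [ (n−k)! (2μ)_k Γ(2μ+2k) ] · ₃F₂(−n+k, n+k+2ν, μ+k+1/2; ν+k+1/2, 2μ+2k+1; 1) · C_k^μ(x). -/

import Mathlib

open Complex

/-- Pochhammer symbol (rising factorial) `(a)_k = a (a+1) ⋯ (a+k-1)`. -/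
noncomputable def poch (a : ℂ) (k : ℕ) : ℂ := ∏ i ∈ Finset.range k, (a + (i : ℂ))

/-- Gauss hypergeometric function `₂F₁(a,b;c;w)` as a series. -/
noncomputable def hyp2F1 (a b c w : ℂ) : ℂ :=
  ∑' k : ℕ, poch a k * poch b k / (poch c k * (Nat.factorial k : ℂ)) * w ^ k

/-- Terminating generalized hypergeometric function `₃F₂(-m,a₂,a₃;b₁,b₂;1)`. -/
noncomputable def hyp3F2 (m : ℕ) (a2 a3 b1 b2 : ℂ) : ℂ :=
  ∑ j ∈ Finset.range (m + 1),
    poch (-(m : ℂ)) j * poch a2 j * poch a3 j /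
      (poch b1 j * poch b2 j * (Nat.factorial j : ℂ))

/-- Gegenbauer polynomial `C_n^μ(x)`. -/
noncomputable def gegenbauerC (n : ℕ) (μ : ℂ) (x : ℂ) : ℂ :=
  poch (2 * μ) n / (Nat.factorial n : ℂ) *
    ∑ j ∈ Finset.range (n + 1),
      poch (-(n : ℂ)) j * poch ((n : ℂ) + 2 * μ) j /
          (poch (μ + 1 / 2) j * (Nat.factorial j : ℂ)) * ((1 - x) / 2) ^ j

/-- Associated Legendre function of the second kind `Q_ν^μ(z)` (principal branches). -/
noncomputable def legendreQ (ν μ z : ℂ) : ℂ :=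
  (Real.sqrt Real.pi : ℂ) * Complex.exp (Real.pi * I * μ) * Complex.Gamma (ν + μ + 1) *
      (z ^ 2 - 1) ^ (μ / 2) /
      ((2 : ℂ) ^ (ν + 1) * Complex.Gamma (ν + 3 / 2) * z ^ (ν + μ + 1)) *
    hyp2F1 ((ν + μ + 2) / 2) ((ν + μ + 1) / 2) (ν + 3 / 2) (1 / z ^ 2)

/-- Legendre polynomial `P_n(x)`. -/
noncomputable def legendrePoly (n : ℕ) (x : ℂ) : ℂ :=
  ∑ j ∈ Finset.range (n + 1),
    poch (-(n : ℂ)) j * poch ((n : ℂ) + 1) j / (poch 1 j * (Nat.factorial j : ℂ)) *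
      ((1 - x) / 2) ^ j

/-- Chebyshev polynomial of the second kind `U_n(x)`. -/
noncomputable def chebyshevU (n : ℕ) (x : ℂ) : ℂ :=
  ((n : ℂ) + 1) *
    ∑ j ∈ Finset.range (n + 1),
      poch (-(n : ℂ)) j * poch ((n : ℂ) + 2) j / (poch (3 / 2) j * (Nat.factorial j : ℂ)) *
        ((1 - x) / 2) ^ j

lemma poch_zero' (a : ℂ) : poch a 0 = 1 := by simp [poch]

lemma poch_succ' (a : ℂ) (n : ℕ) : poch a (n + 1) = poch a n * (a + n) := by
  simp [poch, Finset.prod_range_succ]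

lemma poch_add' (a : ℂ) (m n : ℕ) : poch a (m + n) = poch a m * poch (a + m) n := by
  simp only [poch, Finset.prod_range_add]
  congr 1
  apply Finset.prod_congr rfl
  intro i _
  push_cast
  ring

lemma poch_succ_left' (a : ℂ) (n : ℕ) : poch a (n + 1) = a * poch (a + 1) n := by
  rw [add_comm n 1, poch_add']
  simp [poch]

lemma poch_ne' (a : ℂ) (h : ∀ i : ℕ, a + i ≠ 0) (n : ℕ) : poch a n ≠ 0 :=
  Finset.prod_ne_zero_iff.mpr fun i _ => h i

lemma shift_ne (a : ℂ) (h : ∀ i : ℕ, a + i ≠ 0) (m : ℕ) : ∀ i : ℕ, a + m + i ≠ 0 := by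
  intro i
  have := h (m + i)
  push_cast at this
  rwa [← add_assoc] at this

lemma poch_neg' (n j : ℕ) (hj : j ≤ n) :
    poch (-(n : ℂ)) j = (-1) ^ j * (n.factorial : ℂ) / ((n - j).factorial : ℂ) := by
  induction j with
  | zero =>
    have : (n.factorial : ℂ) ≠ 0 := by exact_mod_cast n.factorial_ne_zero
    simp [poch, this]
  | succ j ih =>
    rw [poch_succ', ih (by omega)]
    obtain ⟨d, rfl⟩ := Nat.exists_eq_add_of_le hj
    have e1 : j + 1 + d - j = d + 1 := by omega
    have e2 : j + 1 + d - (j + 1) = d := by omega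
    rw [e1, e2, Nat.factorial_succ]
    have h1 : (d.factorial : ℂ) ≠ 0 := by exact_mod_cast d.factorial_ne_zero
    have h2 : (d : ℂ) + 1 ≠ 0 := by exact_mod_cast d.succ_ne_zero
    push_cast
    field_simp
    ring

lemma gamma_poch (a : ℂ) (h : ∀ i : ℕ, a + i ≠ 0) (n : ℕ) :
    Complex.Gamma (a + n) = poch a n * Complex.Gamma a := by
  induction n with
  | zero => simp [poch]
  | succ n ih =>
    rw [poch_succ', Nat.cast_succ, ← add_assoc, Complex.Gamma_add_one _ (h n), ih]
    ring

lemma tele_partial (M : ℕ) (b : ℂ) (h : ∀ i : ℕ, b + i ≠ 0) (L : ℕ) :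
    ∑ l ∈ Finset.range (L + 1),
      (-1) ^ l * (b + 2 * l) * ((M + 1).choose l : ℂ) / poch (b + l) (M + 2)
      = (-1) ^ L * (M.choose L : ℂ) / poch (b + L + 1) (M + 1) := by
  induction L with
  | zero =>
    have hb : b ≠ 0 := by simpa using h 0
    have h1 : poch (b + 1) (M + 1) ≠ 0 :=
      poch_ne' _ (by simpa using shift_ne b h 1) _
    simp only [zero_add, Finset.sum_range_one, Nat.cast_zero, add_zero, mul_zero,
      Nat.choose_zero_right, pow_zero]
    rw [poch_succ_left' b (M + 1)]
    field_simp
  | succ L ih =>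
    rw [Finset.sum_range_succ, ih]
    have hc := shift_ne b h (L + 1)
    push_cast at hc ⊢
    rw [← add_assoc] at hc ⊢
    obtain ⟨c, hcd⟩ : ∃ c, c = b + L + 1 := ⟨_, rfl⟩
    have hbc : b + 2 * ((L : ℂ) + 1) = c + L + 1 := by rw [hcd]; ring
    rw [← hcd] at hc ⊢
    rw [hbc]
    have hc0 : c ≠ 0 := by simpa using hc 0
    have hc1 : c + 1 + M ≠ 0 := by
      have := hc (M + 1)
      push_cast at this
      intro h0
      apply this
      rw [← h0]; ring
    have hQ : poch (c + 1) M ≠ 0 := poch_ne' _ (by simpa using shift_ne c hc 1) _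
    rw [poch_succ_left' c (M + 1), poch_succ_left' c M, poch_succ' (c + 1) M,
      Nat.choose_succ_succ]
    have key : (M.choose (L + 1) : ℂ) * (L + 1) = M.choose L * (M - L) := by
      rcases le_or_gt L M with hl | hl
      · have := Nat.choose_succ_right_eq M L
        rw [← Nat.cast_sub hl]
        exact_mod_cast this
      · simp [Nat.choose_eq_zero_of_lt hl, Nat.choose_eq_zero_of_lt (Nat.lt_succ_of_lt hl)]
    push_cast
    field_simp
    rw [pow_succ]
    linear_combination (-(-1 : ℂ) ^ L) * key

lemma tele (N : ℕ) (b : ℂ) (h : ∀ i : ℕ, b + i ≠ 0) :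
    ∑ l ∈ Finset.range (N + 1),
      (-1) ^ l * (b + 2 * l) / ((l.factorial : ℂ) * ((N - l).factorial : ℂ) * poch (b + l) (N + 1))
      = if N = 0 then 1 else 0 := by
  rcases N with _ | M
  · have hb : b ≠ 0 := by simpa using h 0
    simp [poch, hb]
  · have e := tele_partial M b h (M + 1)
    rw [Nat.choose_succ_self] at e
    simp only [Nat.cast_zero, mul_zero, zero_div] at e
    rw [if_neg (Nat.succ_ne_zero M)]
    have hf : ((M + 1).factorial : ℂ) ≠ 0 := by exact_mod_cast (M + 1).factorial_ne_zero
    apply mul_left_cancel₀ hf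
    rw [mul_zero, ← e, Finset.mul_sum]
    apply Finset.sum_congr rfl
    intro l hl
    have hl' : l ≤ M + 1 := by simpa [Nat.lt_succ_iff] using hl
    rw [Nat.cast_choose ℂ hl']
    have h1 : (l.factorial : ℂ) ≠ 0 := by exact_mod_cast l.factorial_ne_zero
    have h2 : ((M + 1 - l).factorial : ℂ) ≠ 0 := by exact_mod_cast (M + 1 - l).factorial_ne_zero
    have h3 := poch_ne' _ (shift_ne b h l) (M + 2)
    field_simp

lemma tri_sum (n : ℕ) (f : ℕ → ℕ → ℂ) :
    ∑ k ∈ Finset.range (n + 1), ∑ i ∈ Finset.range (n - k + 1), f k (k + i)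
      = ∑ j ∈ Finset.range (n + 1), ∑ k ∈ Finset.range (j + 1), f k j := by
  have : ∀ k ∈ Finset.range (n + 1), ∑ i ∈ Finset.range (n - k + 1), f k (k + i)
      = ∑ j ∈ Finset.Ico k (n + 1), f k j := by
    intro k hk
    have hk' : k < n + 1 := by simpa using hk
    rw [Finset.sum_Ico_eq_sum_range]
    congr 2
    omega
  rw [Finset.sum_congr rfl this]
  apply Finset.sum_comm'
  intro k j
  simp only [Finset.mem_range, Finset.mem_Ico]
  omega

lemma key_exp (a h y : ℂ) (ha : ∀ i : ℕ, a + i ≠ 0) (hh : ∀ i : ℕ, h + i ≠ 0) (j : ℕ) :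
    ∑ k ∈ Finset.range (j + 1),
      (-1) ^ k / ((k.factorial : ℂ) * ((j - k).factorial : ℂ) * poch (a + k) k
          * poch (a + 2 * k + 1) (j - k)) *
        ∑ m ∈ Finset.range (k + 1),
          poch (-(k : ℂ)) m * poch ((k : ℂ) + a) m / (poch h m * (m.factorial : ℂ)) * y ^ m
      = y ^ j / ((j.factorial : ℂ) * poch h j) := by
  simp_rw [Finset.mul_sum]
  rw [← tri_sum j (fun m k => (-1) ^ k / ((k.factorial : ℂ) * ((j - k).factorial : ℂ) * poch (a + k) k
          * poch (a + 2 * k + 1) (j - k)) * (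
          poch (-(k : ℂ)) m * poch ((k : ℂ) + a) m / (poch h m * (m.factorial : ℂ)) * y ^ m))]
  have step : ∀ m ∈ Finset.range (j + 1), ∑ l ∈ Finset.range (j - m + 1),
      ((-1) ^ (m + l) / (((m + l).factorial : ℂ) * ((j - (m + l)).factorial : ℂ)
          * poch (a + (m + l : ℕ)) (m + l)
          * poch (a + 2 * (m + l : ℕ) + 1) (j - (m + l))) * (
          poch (-((m + l : ℕ) : ℂ)) m * poch (((m + l : ℕ) : ℂ) + a) m
            / (poch h m * (m.factorial : ℂ)) * y ^ m))
      = if m = j then y ^ j / ((j.factorial : ℂ) * poch h j) else 0 := by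
    intro m hm
    have hmj : m ≤ j := by simpa [Nat.lt_succ_iff] using hm
    obtain ⟨N, rfl⟩ := Nat.exists_eq_add_of_le hmj
    have hb : ∀ i : ℕ, (a + 2 * m) + i ≠ 0 := by
      intro i
      have := ha (2 * m + i)
      push_cast at this
      rwa [← add_assoc] at this
    have t := tele N (a + 2 * m) hb
    have e : m + N - m = N := by omega
    rw [e]
    have : (if m = m + N then y ^ (m + N) / (((m + N).factorial : ℂ) * poch h (m + N)) else 0)
        = y ^ m / ((m.factorial : ℂ) * poch h m) * (if N = 0 then 1 else 0) := by
      by_cases hN : N = 0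
      · subst hN; simp
      · simp [hN]
    rw [this, ← t, Finset.mul_sum]
    apply Finset.sum_congr rfl
    intro l hl
    have hl' : l ≤ N := by simpa [Nat.lt_succ_iff] using hl
    obtain ⟨d, rfl⟩ := Nat.exists_eq_add_of_le hl'
    have e1 : m + (l + d) - (m + l) = d := by omega
    have e2 : m + l - m = l := by omega
    have e3 : l + d - l = d := by omega
    rw [poch_neg' (m + l) m (by omega), e1, e2, e3]
    -- the two factorizations of `poch (a+k) (j+1)`
    have p1 : poch (a + (m + l : ℕ)) (m + l + (d + 1))
        = poch (a + (m + l : ℕ)) (m + l) * ((a + 2 * (m + l : ℕ)) * poch (a + 2 * (m + l : ℕ) + 1) d) := by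
      rw [poch_add', poch_succ_left']
      have : a + ((m + l : ℕ) : ℂ) + ((m + l : ℕ) : ℂ) = a + 2 * (m + l : ℕ) := by ring
      rw [this]
    have p2 : poch (a + (m + l : ℕ)) (m + (l + d + 1))
        = poch (a + (m + l : ℕ)) m * poch (a + 2 * m + l) (l + d + 1) := by
      rw [poch_add']
      have : a + ((m + l : ℕ) : ℂ) + (m : ℂ) = a + 2 * m + l := by push_cast; ring
      rw [this]
    have p3 : m + l + (d + 1) = m + (l + d + 1) := by omega
    rw [p3, p2] at p1
    rw [add_comm ((m + l : ℕ) : ℂ) a]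
    have hz : a + 2 * ((m + l : ℕ) : ℂ) ≠ 0 := by
      have := ha (2 * (m + l))
      push_cast at this ⊢
      exact this
    have hz' : a + 2 * (m : ℂ) + 2 * l = a + 2 * ((m + l : ℕ) : ℂ) := by push_cast; ring
    rw [hz']
    have n1 := poch_ne' _ (shift_ne a ha (m + l)) m
    have n2 := poch_ne' _ (shift_ne a ha (m + l)) (m + l)
    have n3 := poch_ne' _ (shift_ne _ hb l) (l + d + 1)
    have n4 : poch (a + 2 * (m + l : ℕ) + 1) d ≠ 0 := by
      apply poch_ne'
      have := shift_ne a ha (2 * (m + l) + 1)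
      intro i
      have := this i
      push_cast at this ⊢
      rwa [← add_assoc a] at this
    have n5 := poch_ne' _ hh m
    have f1 : ((m + l).factorial : ℂ) ≠ 0 := by exact_mod_cast (m + l).factorial_ne_zero
    have f2 : (l.factorial : ℂ) ≠ 0 := by exact_mod_cast l.factorial_ne_zero
    have f3 : (d.factorial : ℂ) ≠ 0 := by exact_mod_cast d.factorial_ne_zero
    have f4 : (m.factorial : ℂ) ≠ 0 := by exact_mod_cast m.factorial_ne_zero
    have sgn : (-1 : ℂ) ^ (m + l) * (-1) ^ m = (-1) ^ l := by
      rw [pow_add, mul_right_comm, ← mul_pow]; simp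
    generalize poch (a + (m + l : ℕ)) (m + l) = A at *
    generalize poch (a + (m + l : ℕ)) m = B at *
    generalize poch (a + 2 * m + l) (l + d + 1) = C at *
    generalize poch (a + 2 * (m + l : ℕ) + 1) d = D at *
    generalize a + 2 * ((m + l : ℕ) : ℂ) = E at *
    rw [← sgn]
    field_simp
    linear_combination y ^ m * p1
  rw [Finset.sum_congr rfl step]
  simp

/-- connection relation expressing `C_n^ν` as a sum over `C_k^μ`. -/
theorem gegenbauer_connection_relation
    (n : ℕ) (ν μ : ℝ) (hν1 : -(1 / 2) < ν) (hν2 : ν ≠ 0)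
    (hμ1 : -(1 / 2) < μ) (hμ2 : μ ≠ 0) (x : ℂ) :
    gegenbauerC n (ν : ℂ) x =
      poch (2 * (ν : ℂ)) n / poch ((ν : ℂ) + 1 / 2) n *
        ∑ k ∈ Finset.range (n + 1),
          poch ((ν : ℂ) + (k : ℂ) + 1 / 2) (n - k) * poch (2 * (ν : ℂ) + (n : ℂ)) k *
              poch ((μ : ℂ) + 1 / 2) k * Complex.Gamma (2 * (μ : ℂ) + (k : ℂ)) /
              ((Nat.factorial (n - k) : ℂ) * poch (2 * (μ : ℂ)) k *
                Complex.Gamma (2 * (μ : ℂ) + 2 * (k : ℂ))) *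
            hyp3F2 (n - k) ((n : ℂ) + (k : ℂ) + 2 * (ν : ℂ)) ((μ : ℂ) + (k : ℂ) + 1 / 2)
              ((ν : ℂ) + (k : ℂ) + 1 / 2) (2 * (μ : ℂ) + 2 * (k : ℂ) + 1) *
            gegenbauerC k (μ : ℂ) x := by
  have ha : ∀ i : ℕ, 2 * (μ : ℂ) + i ≠ 0 := by
    intro i hi
    have hi' : 2 * μ + i = 0 := by exact_mod_cast hi
    rcases i with _ | i
    · apply hμ2; simpa using hi'
    · push_cast at hi'
      have : (0 : ℝ) ≤ i := Nat.cast_nonneg i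
      linarith
  have half : ∀ t : ℝ, -(1 / 2) < t → ∀ i : ℕ, (t : ℂ) + 1 / 2 + i ≠ 0 := by
    intro t ht i hi
    have hi' : t + 1 / 2 + i = 0 := by
      apply Complex.ofReal_injective
      push_cast
      exact hi
    have : (0 : ℝ) ≤ i := Nat.cast_nonneg i
    linarith
  have hh := half μ hμ1
  have hg := half ν hν1
  unfold gegenbauerC hyp3F2
  generalize hgd : (ν : ℂ) + 1 / 2 = g at *
  have hgk : ∀ k : ℕ, (ν : ℂ) + (k : ℂ) + 1 / 2 = g + k := by intro k; rw [← hgd]; ring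
  have hhk : ∀ k : ℕ, (μ : ℂ) + (k : ℂ) + 1 / 2 = (μ : ℂ) + 1 / 2 + k := by intro k; ring
  simp_rw [hgk, hhk]
  generalize (μ : ℂ) + 1 / 2 = h at *
  generalize hy : (1 - x) / 2 = y
  generalize haa : 2 * (μ : ℂ) = a at *
  generalize 2 * (ν : ℂ) = v at *
  obtain ⟨P, hP⟩ : ∃ P : ℕ → ℂ, ∀ k, P k = ∑ m ∈ Finset.range (k + 1),
      poch (-(k : ℂ)) m * poch ((k : ℂ) + a) m / (poch h m * (m.factorial : ℂ)) * y ^ m :=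
    ⟨_, fun _ => rfl⟩
  have K := key_exp a h y ha hh
  simp_rw [← hP] at K ⊢
  let F : ℕ → ℕ → ℂ := fun k j =>
    poch v n * (-1) ^ j * poch (v + n) j * poch h j / (((n - j).factorial : ℂ) * poch g j) *
      ((-1) ^ k / ((k.factorial : ℂ) * ((j - k).factorial : ℂ) * poch (a + k) k
          * poch (a + 2 * k + 1) (j - k)) * P k)
  have fne : ∀ k : ℕ, (k.factorial : ℂ) ≠ 0 := fun k => by exact_mod_cast k.factorial_ne_zero
  trans ∑ j ∈ Finset.range (n + 1), ∑ k ∈ Finset.range (j + 1), F k j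
  · rw [Finset.mul_sum]
    apply Finset.sum_congr rfl
    intro j hj
    have hj' : j ≤ n := by simpa [Nat.lt_succ_iff] using hj
    simp only [F]
    rw [← Finset.mul_sum, K j, poch_neg' n j hj', add_comm (n : ℂ) v]
    have := fne n
    have := fne j
    have := fne (n - j)
    have := poch_ne' g hg j
    have := poch_ne' h hh j
    field_simp
  · rw [← tri_sum n F, Finset.mul_sum]
    apply Finset.sum_congr rfl
    intro k hk
    have hk' : k ≤ n := by simpa [Nat.lt_succ_iff] using hk
    rw [Finset.mul_sum, Finset.sum_mul, Finset.mul_sum]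
    apply Finset.sum_congr rfl
    intro i hi
    have hi' : i ≤ n - k := by simpa [Nat.lt_succ_iff] using hi
    simp only [F]
    have G := gamma_poch (a + k) (shift_ne a ha k) k
    have ea : a + (k : ℂ) + k = a + 2 * k := by ring
    rw [ea] at G
    have Gne : Complex.Gamma (a + k) ≠ 0 := by
      apply Complex.Gamma_ne_zero
      intro m hm
      apply shift_ne a ha k m
      rw [hm]; ring
    have q1 := poch_add' g k (n - k)
    have q2 := poch_add' g k i
    have q3 := poch_add' h k i
    have q4 := poch_add' (v + n) k i
    have e4 : v + (n : ℂ) + k = (n : ℂ) + k + v := by ring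
    rw [e4] at q4
    have e1 : k + (n - k) = n := by omega
    rw [e1] at q1
    have e2 : n - (k + i) = n - k - i := by omega
    have e3 : k + i - k = i := by omega
    rw [G, poch_neg' (n - k) i hi', q1, q2, q3, q4, e2, e3]
    have := fne k
    have := fne i
    have := fne (n - k)
    have := fne (n - k - i)
    have := poch_ne' g hg k
    have := poch_ne' _ (shift_ne g hg k) i
    have := poch_ne' _ (shift_ne g hg k) (n - k)
    have := poch_ne' a ha k
    have := poch_ne' _ (shift_ne a ha k) k
    have n4 : poch (a + 2 * k + 1) i ≠ 0 := by
      apply poch_ne'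
      have := shift_ne a ha (2 * k + 1)
      intro i
      have := this i
      push_cast at this ⊢
      rwa [← add_assoc a] at this
    have sgn : (-1 : ℂ) ^ (k + i) * (-1) ^ k = (-1) ^ i := by
      rw [pow_add, mul_right_comm, ← mul_pow]; simp
    rw [← sgn]
    field_simp
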